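/- In Bernoulli bond percolation on Z^d, for every ε > 0 there is c > 0 such that for all p ∈ [0, 1−ε] and all n ≥ 1, θ_n'(p) ≥ (c/2)·(n/Σ_n(p))·θ_n(p), where θ_n(p) = P_p[0 ↔ ∂Λ_n] and Σ_n(p) = Σ_{k=0}^{n−1} θ_k(p). -/

import Mathlib

open MeasureTheory

/-- Vertices of the lattice `ℤ^d`. -/
abbrev Vertex (d : ℕ) := Fin d → ℤ

/-- Nearest-neighbour edges of `ℤ^d`: the pair `(v, i)` represents the edge
`{v, v + e_i}` where `e_i` is the `i`-th unit vector. -/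
abbrev Edge (d : ℕ) := (Fin d → ℤ) × Fin d

/-- A percolation configuration: each edge is open (`true`) or closed (`false`). -/
abbrev Config (d : ℕ) := Edge d → Bool

/-- `u` and `v` are joined by an open edge in the configuration `ω`. -/
def openAdj {d : ℕ} (ω : Config d) (u v : Vertex d) : Prop :=
  (∃ i, v = u + Pi.single i 1 ∧ ω (u, i) = true) ∨
  (∃ i, u = v + Pi.single i 1 ∧ ω (v, i) = true)

/-- `x ↔ y`: there is a finite path of open edges joining `x` and `y`. -/
def Conn {d : ℕ} (ω : Config d) (x y : Vertex d) : Prop :=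
  Relation.ReflTransGen (openAdj ω) x y
open ENNReal
/-- `P` is the family of Bernoulli bond percolation measures: for `p ∈ [0,1]`,
`P p` is the product of Bernoulli(`p`) measures on the edges. -/
def IsBernoulliFamily {d : ℕ} (P : ℝ → Measure (Config d)) : Prop :=
  (∀ p, IsProbabilityMeasure (P p)) ∧
  ∀ p ∈ Set.Icc (0 : ℝ) 1, ∀ (S : Finset (Edge d)) (f : Edge d → Bool),
    P p {ω | ∀ e ∈ S, ω e = f e} =
      ∏ e ∈ S, ENNReal.ofReal (if f e then p else 1 - p)


/-- The inner boundary `∂Λ_n` of the box `Λ_n = [-n,n]^d ∩ ℤ^d`. -/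
def bdry (d n : ℕ) : Set (Vertex d) :=
  {x | (∀ i, |x i| ≤ (n : ℤ)) ∧ ∃ i, |x i| = (n : ℤ)}

/-- `θ_n(p) = P_p[0 ↔ ∂Λ_n]`. -/
noncomputable def theta {d : ℕ} (P : ℝ → Measure (Config d)) (n : ℕ) (p : ℝ) : ℝ :=
  (P p {ω | ∃ y ∈ bdry d n, Conn ω 0 y}).toReal

/-!
The event `0 ↔ ∂Λ_n` depends on the finitely many edges of `Λ_n`, so the Margulis–Russo formula
writes `θ_n'` as the sum of their influences. For any monotone exploration which determines the
event, the OSSS inequality bounds its variance `θ_n (1 - θ_n)` by the sum over the edges of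
revealment times influence, up to the factor `p (1 - p) ≤ 1/4`; it follows by conditioning on an
edge that is revealed whatever the configuration, and induction. It is applied to the `n`
explorations of the clusters of `∂Λ_k`, `1 ≤ k ≤ n`. The exploration from `∂Λ_k` reveals an edge
only if one of its endpoints `v` is joined to distance `|k - ‖v‖|`, which has probability
`θ_{|k - ‖v‖|}`; summed over `k` and the two endpoints this is at most `4 Σ_n`. Finally, `1 - θ_n`
is at least the probability that all the edges of `Λ_1` are closed.

Distances are measured in the sup norm, for which `∂Λ_k` is a sphere.
-/

lemma indicator_one_mem_Icc {α : Type*} (A : Set α) (x : α) :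
    A.indicator (1 : α → ℝ) x ∈ Set.Icc 0 1 :=
  ⟨Set.indicator_nonneg (fun _ _ => zero_le_one) x,
    Set.indicator_le_self' (fun _ _ => zero_le_one) x⟩

lemma monotone_indicator_one_of_isUpperSet {α : Type*} [Preorder α] {A : Set α}
    (hA : IsUpperSet A) : Monotone (A.indicator (1 : α → ℝ)) := fun x y hxy => by
  by_cases hx : x ∈ A
  · simp [hx, hA hxy hx]
  · rw [Set.indicator_of_notMem hx]
    exact (indicator_one_mem_Icc A y).1

section Slice

open Function

variable {E : Type*} [DecidableEq E]

/-- The function `f` with its argument `e` frozen to the value `b`. -/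
def slice (e : E) (b : Bool) (f : (E → Bool) → ℝ) : (E → Bool) → ℝ := fun σ => f (update σ e b)

lemma slice_slice (e : E) (b b' : Bool) (f : (E → Bool) → ℝ) :
    slice e b (slice e b' f) = slice e b' f := by
  funext σ
  simp [slice]

lemma slice_false_le_slice_true {f : (E → Bool) → ℝ} (hf : Monotone f) (e : E) :
    slice e false f ≤ slice e true f :=
  fun _ => hf (update_le_update_iff'.2 (Bool.false_le true))

lemma slice_indicator (e : E) (b : Bool) (A : Set (E → Bool)) :
    slice e b (A.indicator 1) = {σ | update σ e b ∈ A}.indicator 1 := rfl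

end Slice

section BernoulliExpectation

open Function

variable {E : Type*}

/-- The probability that a Bernoulli(`q`) bit takes the value `b`. -/
def bitWeight (q : ℝ) (b : Bool) : ℝ := if b then q else 1 - q

lemma bitWeight_nonneg {q : ℝ} (hq : q ∈ Set.Icc (0 : ℝ) 1) (b : Bool) : 0 ≤ bitWeight q b := by
  cases b
  · exact sub_nonneg.2 hq.2
  · exact hq.1

lemma hasDerivAt_bitWeight (b : Bool) (q : ℝ) :
    HasDerivAt (bitWeight · b) (if b then 1 else -1) q := by
  cases b
  · simpa [bitWeight] using (hasDerivAt_id q).const_sub 1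
  · simpa [bitWeight] using hasDerivAt_id' q

variable [Fintype E]

/-- The probability of the configuration `σ` when the bits are independent and the bit `e` has
parameter `p e`. -/
def weight (p : E → ℝ) (σ : E → Bool) : ℝ := ∏ e, bitWeight (p e) (σ e)

lemma weight_nonneg {p : E → ℝ} (hp : ∀ e, p e ∈ Set.Icc (0 : ℝ) 1) (σ : E → Bool) :
    0 ≤ weight p σ :=
  Finset.prod_nonneg fun e _ => bitWeight_nonneg (hp e) (σ e)

variable [DecidableEq E]

/-- The probability that the bits other than `e` agree with `σ`. -/
def weightOff (p : E → ℝ) (e : E) (σ : E → Bool) : ℝ :=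
  ∏ x ∈ Finset.univ.erase e, bitWeight (p x) (σ x)

lemma weight_eq_bitWeight_mul_weightOff (p : E → ℝ) (e : E) (σ : E → Bool) :
    weight p σ = bitWeight (p e) (σ e) * weightOff p e σ :=
  (Finset.mul_prod_erase _ (fun x => bitWeight (p x) (σ x)) (Finset.mem_univ e)).symm

lemma weightOff_update (p : E → ℝ) (e : E) (σ : E → Bool) (b : Bool) :
    weightOff p e (update σ e b) = weightOff p e σ :=
  Finset.prod_congr rfl fun x hx => by rw [update_of_ne (Finset.ne_of_mem_erase hx)]

/-- Expectation, as a linear functional, under the product of the Bernoulli(`p e`) measures. -/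
def expect (p : E → ℝ) : ((E → Bool) → ℝ) →ₗ[ℝ] ℝ := ∑ σ, weight p σ • LinearMap.proj σ

lemma expect_apply (p : E → ℝ) (f : (E → Bool) → ℝ) : expect p f = ∑ σ, weight p σ * f σ := by
  simp [expect]

lemma expect_mono {p : E → ℝ} (hp : ∀ e, p e ∈ Set.Icc (0 : ℝ) 1) : Monotone (expect p) :=
  fun f g hfg => by
    simp only [expect_apply]
    exact Finset.sum_le_sum fun σ _ => mul_le_mul_of_nonneg_left (hfg σ) (weight_nonneg hp σ)

lemma expect_nonneg {p : E → ℝ} (hp : ∀ e, p e ∈ Set.Icc (0 : ℝ) 1) {f : (E → Bool) → ℝ}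
    (hf : 0 ≤ f) : 0 ≤ expect p f := by
  simpa using expect_mono hp hf

lemma expect_one (p : E → ℝ) : expect p 1 = 1 := by
  have sum_bitWeight (e : E) : ∑ b, bitWeight (p e) b = 1 := by simp [bitWeight]
  simp only [expect_apply, weight, Pi.one_apply, mul_one]
  rw [← Fintype.prod_sum fun e => bitWeight (p e)]
  simp only [sum_bitWeight, Finset.prod_const_one]

lemma expect_const (p : E → ℝ) (c : ℝ) : expect p (fun _ => c) = c := by
  have h_const : (fun _ => c) = c • (1 : (E → Bool) → ℝ) := by ext; simp
  rw [h_const, map_smul, expect_one, smul_eq_mul, mul_one]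

lemma expect_le_one_sub_weight {p : E → ℝ} (hp : ∀ e, p e ∈ Set.Icc (0 : ℝ) 1)
    {f : (E → Bool) → ℝ} (hf : f ≤ 1) {τ : E → Bool} (hτ : f τ = 0) :
    expect p f ≤ 1 - weight p τ := by
  have h_le : f ≤ 1 - Pi.single τ 1 := fun σ => by
    obtain rfl | hσ := eq_or_ne σ τ
    · simp [hτ]
    · simpa [hσ] using hf σ
  have h_single : expect p (Pi.single τ 1) = weight p τ := by simp [expect_apply, Pi.single_apply]
  simpa [expect_one, h_single] using expect_mono hp h_le

/-- Flipping the bit `e` permutes the configurations, so every value taken with `e` open pairs with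
one taken with `e` closed. -/
lemma two_mul_sum_eq_sum_update (e : E) (g : (E → Bool) → ℝ) :
    2 * ∑ σ, g σ = ∑ σ, (g (update σ e true) + g (update σ e false)) := by
  have flip_involutive : Involutive fun σ : E → Bool => update σ e (!(σ e)) := fun σ => by simp
  have sum_flip : ∑ σ, g (update σ e (!(σ e))) = ∑ σ, g σ := flip_involutive.bijective.sum_comp g
  rw [two_mul]
  nth_rw 2 [← sum_flip]
  rw [← Finset.sum_add_distrib]
  refine Finset.sum_congr rfl fun σ _ => ?_
  have update_self_eq := update_eq_self e σ
  cases hσ : σ e <;> rw [hσ] at update_self_eq <;> simp [update_self_eq, add_comm]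

lemma two_mul_expect (p : E → ℝ) (e : E) (f : (E → Bool) → ℝ) :
    2 * expect p f = ∑ σ, weightOff p e σ *
      (p e * slice e true f σ + (1 - p e) * slice e false f σ) := by
  rw [expect_apply, two_mul_sum_eq_sum_update e]
  refine Finset.sum_congr rfl fun σ _ => ?_
  simp only [weight_eq_bitWeight_mul_weightOff p e, weightOff_update, update_self, bitWeight, slice,
    if_true, Bool.false_eq_true, if_false]
  ring

lemma two_mul_expect_slice (p : E → ℝ) (e : E) (b : Bool) (f : (E → Bool) → ℝ) :
    2 * expect p (slice e b f) = ∑ σ, weightOff p e σ * slice e b f σ := by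
  rw [two_mul_expect p e]
  simp only [slice_slice]
  exact Finset.sum_congr rfl fun σ _ => by ring

lemma expect_eq_expect_slice (p : E → ℝ) (e : E) (f : (E → Bool) → ℝ) :
    expect p f = p e * expect p (slice e true f) + (1 - p e) * expect p (slice e false f) := by
  have h_double : 2 * expect p f = p e * (2 * expect p (slice e true f)) +
      (1 - p e) * (2 * expect p (slice e false f)) := by
    rw [two_mul_expect p e, two_mul_expect_slice, two_mul_expect_slice, Finset.mul_sum,
      Finset.mul_sum, ← Finset.sum_add_distrib]
    exact Finset.sum_congr rfl fun σ _ => by ring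
  linarith

end BernoulliExpectation

section Influence

open Function

variable {E : Type*} [Fintype E] [DecidableEq E]

/-- The influence of the bit `e` on `f`. For the indicator of an increasing event this is the
probability that `e` is pivotal. -/
def influence (p : E → ℝ) (f : (E → Bool) → ℝ) (e : E) : ℝ :=
  expect p (slice e true f - slice e false f)

lemma influence_nonneg {p : E → ℝ} (hp : ∀ e, p e ∈ Set.Icc (0 : ℝ) 1) {f : (E → Bool) → ℝ}
    (hf : Monotone f) (e : E) : 0 ≤ influence p f e :=
  expect_nonneg hp (sub_nonneg.2 (slice_false_le_slice_true hf e))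

lemma influence_eq_sum (p : E → ℝ) (f : (E → Bool) → ℝ) (e : E) :
    influence p f e = ∑ σ, weightOff p e σ * (if σ e then 1 else -1) * f σ := by
  have h_double : 2 * influence p f e =
      2 * ∑ σ, weightOff p e σ * (if σ e then 1 else -1) * f σ := by
    rw [influence, map_sub, mul_sub, two_mul_expect_slice, two_mul_expect_slice,
      two_mul_sum_eq_sum_update e, ← Finset.sum_sub_distrib]
    refine Finset.sum_congr rfl fun σ _ => ?_
    simp only [weightOff_update, update_self, slice, if_true, Bool.false_eq_true, if_false]
    ring
  linarith

/-- The Margulis–Russo formula. -/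
theorem hasDerivAt_expect {p : ℝ → E → ℝ} {p' : E → ℝ} {t : ℝ}
    (hp : ∀ e, HasDerivAt (p · e) (p' e) t) (f : (E → Bool) → ℝ) :
    HasDerivAt (fun s => expect (p s) f) (∑ e, p' e * influence (p t) f e) t := by
  have hasDerivAt_weight (σ : E → Bool) : HasDerivAt (fun s => weight (p s) σ)
      (∑ e, weightOff (p t) e σ * ((if σ e then 1 else -1) * p' e)) t :=
    HasDerivAt.fun_finsetProd fun e _ =>
      (hasDerivAt_bitWeight (σ e) (p t e)).comp (h := (p · e)) t (hp e)
  have derivative_eq : ∑ e, p' e * influence (p t) f e =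
      ∑ σ, (∑ e, weightOff (p t) e σ * ((if σ e then 1 else -1) * p' e)) * f σ := by
    simp only [influence_eq_sum, Finset.mul_sum, Finset.sum_mul]
    rw [Finset.sum_comm]
    exact Finset.sum_congr rfl fun σ _ => Finset.sum_congr rfl fun e _ => by ring
  simp only [expect_apply, derivative_eq]
  exact HasDerivAt.fun_sum fun σ _ => (hasDerivAt_weight σ).mul_const (f σ)

end Influence

section OSSS

open Function

variable {E : Type*}

/-- A family of revealed sets `R σ` which increases with `σ` and such that the bits of `σ` in `R σ`
determine `g σ`. It stands for an exploration algorithm computing `g`: since `R` is monotone, an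
element of `R ⊥` is revealed whatever the configuration, hence may be queried first. -/
structure IsMonotoneCertificate (R : (E → Bool) → Set E) (g : (E → Bool) → ℝ) : Prop where
  monotone : Monotone R
  eq_of_eqOn : ∀ {σ τ : E → Bool}, Set.EqOn σ τ (R σ) → g σ = g τ

variable [DecidableEq E]

/-- The bits still to be revealed once the bit `e` has been found to have the value `b`. -/
def revealedAfter (R : (E → Bool) → Set E) (e : E) (b : Bool) : (E → Bool) → Set E :=
  fun σ => R (update σ e b) \ {e}

lemma IsMonotoneCertificate.slice_revealedAfter {R : (E → Bool) → Set E} {g : (E → Bool) → ℝ}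
    (hR : IsMonotoneCertificate R g) (e : E) (b : Bool) :
    IsMonotoneCertificate (revealedAfter R e b) (slice e b g) where
  monotone σ τ hστ :=
    Set.sdiff_subset_sdiff_left (hR.monotone (update_le_update_iff.2 ⟨le_rfl, fun x _ => hστ x⟩))
  eq_of_eqOn {σ τ} h := hR.eq_of_eqOn fun x hx => by
    obtain rfl | hxe := eq_or_ne x e
    · simp
    · simpa [hxe] using h ⟨hx, hxe⟩

variable [Fintype E]

/-- Covariance under the product of the Bernoulli(`p e`) measures. -/
def covariance (p : E → ℝ) (f g : (E → Bool) → ℝ) : ℝ := expect p (f * g) - expect p f * expect p g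

lemma covariance_const_right (p : E → ℝ) (f : (E → Bool) → ℝ) (c : ℝ) :
    covariance p f (fun _ => c) = 0 := by
  have h_mul : (f * fun _ => c) = c • f := by ext; simp [mul_comm]
  rw [covariance, h_mul, map_smul, expect_const, smul_eq_mul]
  ring

lemma covariance_indicator_self (p : E → ℝ) (A : Set (E → Bool)) :
    covariance p (A.indicator 1) (A.indicator 1) =
      expect p (A.indicator 1) * (1 - expect p (A.indicator 1)) := by
  rw [covariance, ← Set.inter_indicator_one, Set.inter_self, mul_one_sub]

lemma covariance_eq_covariance_slice (p : E → ℝ) (e : E) (f g : (E → Bool) → ℝ) :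
    covariance p f g = p e * covariance p f (slice e true g) +
      (1 - p e) * covariance p f (slice e false g) + p e * (1 - p e) *
        expect p ((slice e true f - slice e false f) * (slice e true g - slice e false g)) := by
  have slice_mul (b : Bool) (h : (E → Bool) → ℝ) : slice e b (f * h) = slice e b f * slice e b h :=
    rfl
  simp only [covariance]
  rw [expect_eq_expect_slice p e (f * g), expect_eq_expect_slice p e (f * slice e true g),
    expect_eq_expect_slice p e (f * slice e false g), expect_eq_expect_slice p e g]
  simp only [slice_mul, slice_slice, mul_sub, sub_mul, map_sub]
  ring

lemma covariance_le_covariance_slice {p : E → ℝ} (hp : ∀ e, p e ∈ Set.Icc (0 : ℝ) 1)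
    {f g : (E → Bool) → ℝ} (hf : Monotone f) (hg : ∀ σ, g σ ∈ Set.Icc (0 : ℝ) 1) (e : E) :
    covariance p f g ≤ p e * covariance p f (slice e true g) +
      (1 - p e) * covariance p f (slice e false g) + p e * (1 - p e) * influence p f e := by
  rw [covariance_eq_covariance_slice p e]
  have h_nonneg : 0 ≤ p e * (1 - p e) := mul_nonneg (hp e).1 (sub_nonneg.2 (hp e).2)
  gcongr
  refine expect_mono hp fun σ => mul_le_of_le_one_right ?_ ?_
  · exact sub_nonneg.2 (slice_false_le_slice_true hf e σ)
  · exact (sub_le_self _ (hg _).1).trans (hg _).2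

/-- The probability that the bit `e` is revealed. -/
noncomputable def revealment (p : E → ℝ) (R : (E → Bool) → Set E) (e : E) : ℝ :=
  expect p ({σ | e ∈ R σ}.indicator 1)

lemma revealment_nonneg {p : E → ℝ} (hp : ∀ e, p e ∈ Set.Icc (0 : ℝ) 1) (R : (E → Bool) → Set E)
    (e : E) : 0 ≤ revealment p R e :=
  expect_nonneg hp fun σ => (indicator_one_mem_Icc _ σ).1

lemma revealment_eq_revealment_revealedAfter (p : E → ℝ) {R : (E → Bool) → Set E} {e : E}
    (he : ∀ σ, e ∈ R σ) (x : E) :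
    revealment p R x = p e * revealment p (revealedAfter R e true) x +
      (1 - p e) * revealment p (revealedAfter R e false) x + (Pi.single e 1 : E → ℝ) x := by
  obtain rfl | hxe := eq_or_ne x e
  · simp [revealment, revealedAfter, he, expect_one, expect_const]
  · have event_eq (b : Bool) :
        {σ | update σ e b ∈ {τ | x ∈ R τ}} = {σ | x ∈ revealedAfter R e b σ} := by
      ext σ
      simp [revealedAfter, hxe]
    simp only [revealment, expect_eq_expect_slice p e ({σ | x ∈ R σ}.indicator 1),
      slice_indicator, event_eq, Pi.single_eq_of_ne hxe, add_zero]

/-- The OSSS inequality for a monotone function. -/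
theorem IsMonotoneCertificate.covariance_le {p : E → ℝ} (hp : ∀ e, p e ∈ Set.Icc (0 : ℝ) 1)
    {f g : (E → Bool) → ℝ} (hf : Monotone f) (hg : ∀ σ, g σ ∈ Set.Icc (0 : ℝ) 1)
    {R : (E → Bool) → Set E} (hR : IsMonotoneCertificate R g) :
    covariance p f g ≤ ∑ e, revealment p R e * (p e * (1 - p e) * influence p f e) := by
  set w : E → ℝ := fun e => p e * (1 - p e) * influence p f e
  have one_sub_nonneg (e : E) : 0 ≤ 1 - p e := sub_nonneg.2 (hp e).2
  induction h_card : (R ⊤).ncard using Nat.strong_induction_on generalizing g R with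
  | _ N ih =>
  obtain h_empty | ⟨e, he⟩ := (R ⊥).eq_empty_or_nonempty
  · have g_const : g = fun _ => g ⊥ := funext fun σ => (hR.eq_of_eqOn (by simp [h_empty])).symm
    rw [g_const, covariance_const_right]
    exact Finset.sum_nonneg fun x _ => mul_nonneg (revealment_nonneg hp R x)
      (mul_nonneg (mul_nonneg (hp x).1 (one_sub_nonneg x)) (influence_nonneg hp hf x))
  · have mem_R (σ : E → Bool) : e ∈ R σ := hR.monotone bot_le he
    have ih_slice (b : Bool) : covariance p f (slice e b g) ≤
        ∑ x, revealment p (revealedAfter R e b) x * w x := by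
      refine ih _ ?_ (fun σ => hg _) (hR.slice_revealedAfter e b) rfl
      rw [← h_card]
      refine Set.ncard_lt_ncard ⟨Set.sdiff_subset.trans (hR.monotone le_top), fun h => ?_⟩
      exact (h (mem_R ⊤)).2 rfl
    calc covariance p f g
        ≤ p e * covariance p f (slice e true g) + (1 - p e) * covariance p f (slice e false g) +
          w e := covariance_le_covariance_slice hp hf hg e
      _ ≤ p e * ∑ x, revealment p (revealedAfter R e true) x * w x +
          (1 - p e) * ∑ x, revealment p (revealedAfter R e false) x * w x + w e := by
        have := (hp e).1
        have := one_sub_nonneg e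
        gcongr <;> exact ih_slice _
      _ = ∑ x, revealment p R x * w x := by
        simp only [revealment_eq_revealment_revealedAfter p mem_R, add_mul, mul_assoc,
          Finset.sum_add_distrib, Finset.mul_sum, Pi.single_apply, ite_mul, one_mul, zero_mul,
          Finset.sum_ite_eq', Finset.mem_univ, if_true]

theorem card_mul_covariance_le {ι : Type*} {s : Finset ι} {p : E → ℝ}
    (hp : ∀ e, p e ∈ Set.Icc (0 : ℝ) 1) {f g : (E → Bool) → ℝ} (hf : Monotone f)
    (hg : ∀ σ, g σ ∈ Set.Icc (0 : ℝ) 1) {R : ι → (E → Bool) → Set E}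
    (hR : ∀ i ∈ s, IsMonotoneCertificate (R i) g) {M : ℝ}
    (hM : ∀ e, ∑ i ∈ s, revealment p (R i) e ≤ M) :
    s.card * covariance p f g ≤ M * ∑ e, p e * (1 - p e) * influence p f e := by
  calc s.card * covariance p f g = ∑ _i ∈ s, covariance p f g := by simp
    _ ≤ ∑ i ∈ s, ∑ e, revealment p (R i) e * (p e * (1 - p e) * influence p f e) :=
      Finset.sum_le_sum fun i hi => (hR i hi).covariance_le hp hf hg
    _ = ∑ e, (∑ i ∈ s, revealment p (R i) e) * (p e * (1 - p e) * influence p f e) := by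
      rw [Finset.sum_comm]
      simp only [Finset.sum_mul]
    _ ≤ ∑ e, M * (p e * (1 - p e) * influence p f e) :=
      Finset.sum_le_sum fun e _ => mul_le_mul_of_nonneg_right (hM e) <|
        mul_nonneg (mul_nonneg (hp e).1 (sub_nonneg.2 (hp e).2)) (influence_nonneg hp hf e)
    _ = M * ∑ e, p e * (1 - p e) * influence p f e := (Finset.mul_sum ..).symm

end OSSS

lemma sum_range_dist_le {a : ℕ → ℝ} (ha : Antitone a) (ha_nonneg : 0 ≤ a) {m n : ℕ} (hmn : m ≤ n) :
    ∑ k ∈ Finset.range n, a (Nat.dist (k + 1) m) ≤ 2 * ∑ k ∈ Finset.range n, a k := by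
  have below_le : ∑ k ∈ Finset.range m, a (Nat.dist (k + 1) m) ≤ ∑ k ∈ Finset.range n, a k := by
    calc ∑ k ∈ Finset.range m, a (Nat.dist (k + 1) m)
        = ∑ k ∈ Finset.range m, a (m - 1 - k) := Finset.sum_congr rfl fun k hk => by
          rw [Nat.dist_eq_sub_of_le (Finset.mem_range.1 hk)]
          congr 1
          omega
      _ = ∑ k ∈ Finset.range m, a k := Finset.sum_range_reflect a m
      _ ≤ ∑ k ∈ Finset.range n, a k := Finset.sum_le_sum_of_subset_of_nonneg
        (Finset.range_mono hmn) fun k _ _ => ha_nonneg k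
  have above_le : ∑ k ∈ Finset.Ico m n, a (Nat.dist (k + 1) m) ≤ ∑ k ∈ Finset.range n, a k := by
    rw [Finset.sum_Ico_eq_sum_range]
    calc ∑ k ∈ Finset.range (n - m), a (Nat.dist (m + k + 1) m)
        ≤ ∑ k ∈ Finset.range (n - m), a k := Finset.sum_le_sum fun k _ => ha <| by
          rw [Nat.dist_eq_sub_of_le_right (by omega)]
          omega
      _ ≤ ∑ k ∈ Finset.range n, a k := Finset.sum_le_sum_of_subset_of_nonneg
        (Finset.range_mono (Nat.sub_le n m)) fun k _ _ => ha_nonneg k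
  rw [← Finset.sum_range_add_sum_Ico _ hmn, two_mul]
  exact add_le_add below_le above_le

section Lattice

variable {d : ℕ}

/-- The sup-norm distance on `ℤ^d`, as a natural number. -/
def supDist (x y : Vertex d) : ℕ := Finset.univ.sup fun i => (x i - y i).natAbs

lemma supDist_le_iff {x y : Vertex d} {m : ℕ} :
    supDist x y ≤ m ↔ ∀ i, (x i - y i).natAbs ≤ m := by
  simp [supDist]

lemma natAbs_sub_le_supDist (x y : Vertex d) (i : Fin d) : (x i - y i).natAbs ≤ supDist x y :=
  supDist_le_iff.1 le_rfl i

lemma supDist_self (x : Vertex d) : supDist x x = 0 := by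
  simp [supDist]

lemma supDist_comm (x y : Vertex d) : supDist x y = supDist y x := by
  exact Finset.sup_congr rfl fun _ _ => by omega

lemma supDist_triangle (x y z : Vertex d) : supDist x z ≤ supDist x y + supDist y z :=
  supDist_le_iff.2 fun i => by
    have := natAbs_sub_le_supDist x y i
    have := natAbs_sub_le_supDist y z i
    omega

lemma supDist_add_right (x y v : Vertex d) : supDist (x + v) (y + v) = supDist x y := by
  simp [supDist]

/-- The inner boundary `∂Λ_m(c)` of the box of radius `m` centred at `c`. -/
def boxBdry (c : Vertex d) (m : ℕ) : Set (Vertex d) := {y | supDist y c = m}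

lemma mem_boxBdry {c y : Vertex d} {m : ℕ} : y ∈ boxBdry c m ↔ supDist y c = m := Iff.rfl

lemma bdry_eq_boxBdry_zero (hd : 0 < d) (n : ℕ) : bdry d n = boxBdry 0 n := by
  have : NeZero d := ⟨hd.ne'⟩
  ext x
  obtain ⟨i, -, hi⟩ := Finset.exists_mem_eq_sup Finset.univ Finset.univ_nonempty
    fun i => (x i - (0 : Vertex d) i).natAbs
  have abs_le_iff (m : ℕ) (j : Fin d) : |x j| ≤ m ↔ (x j - (0 : Vertex d) j).natAbs ≤ m := by
    rw [Pi.zero_apply, sub_zero, Int.abs_eq_natAbs, Nat.cast_le]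
  have abs_eq_iff (m : ℕ) (j : Fin d) : |x j| = m ↔ (x j - (0 : Vertex d) j).natAbs = m := by
    rw [Pi.zero_apply, sub_zero, Int.abs_eq_natAbs, Nat.cast_inj]
  simp only [bdry, Set.mem_ofPred_eq, mem_boxBdry, abs_le_iff, abs_eq_iff]
  constructor
  · rintro ⟨h_le, j, hj⟩
    exact le_antisymm (supDist_le_iff.2 h_le) (hj.symm.trans_le (natAbs_sub_le_supDist x 0 j))
  · rintro rfl
    exact ⟨natAbs_sub_le_supDist x 0, i, hi.symm⟩

/-- The two endpoints of an edge. -/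
def endpoints (e : Edge d) : Sym2 (Vertex d) := s(e.1, e.1 + Pi.single e.2 1)

lemma openAdj_iff_exists_edge {ω : Config d} {u v : Vertex d} :
    openAdj ω u v ↔ ∃ e, ω e = true ∧ endpoints e = s(u, v) := by
  constructor
  · rintro (⟨i, rfl, h_open⟩ | ⟨i, rfl, h_open⟩)
    · exact ⟨(u, i), h_open, rfl⟩
    · exact ⟨(v, i), h_open, Sym2.eq_swap⟩
  · rintro ⟨⟨x, i⟩, h_open, h_ends⟩
    obtain ⟨rfl, rfl⟩ | ⟨rfl, rfl⟩ := Sym2.eq_iff.1 h_ends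
    · exact Or.inl ⟨i, rfl, h_open⟩
    · exact Or.inr ⟨i, rfl, h_open⟩

lemma supDist_le_one_of_endpoints_eq {e : Edge d} {u v : Vertex d} (h : endpoints e = s(u, v)) :
    supDist v u ≤ 1 := by
  have supDist_endpoint : supDist (e.1 + Pi.single e.2 1) e.1 ≤ 1 := supDist_le_iff.2 fun j => by
    by_cases hj : j = e.2 <;> simp [hj]
  obtain ⟨rfl, rfl⟩ | ⟨rfl, rfl⟩ := Sym2.eq_iff.1 h
  · exact supDist_endpoint
  · rwa [supDist_comm]

lemma openAdj.supDist_le_succ {ω : Config d} {u v : Vertex d} (h : openAdj ω u v) (c : Vertex d) :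
    supDist v c ≤ supDist u c + 1 := by
  obtain ⟨e, -, h_ends⟩ := openAdj_iff_exists_edge.1 h
  have := supDist_le_one_of_endpoints_eq h_ends
  have := supDist_triangle v u c
  omega

/-- The edges of `ℤ^d` with both endpoints in the box `Λ_n`. -/
noncomputable def boxEdges (d n : ℕ) : Finset (Edge d) :=
  open Classical in
  (Finset.Icc (fun _ => -(n : ℤ)) (fun _ => (n : ℤ)) ×ˢ Finset.univ).filter fun e =>
    ∀ v ∈ endpoints e, supDist v 0 ≤ n

lemma mem_boxEdges {n : ℕ} {e : Edge d} :
    e ∈ boxEdges d n ↔ ∀ v ∈ endpoints e, supDist v 0 ≤ n := by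
  simp only [boxEdges, Finset.mem_filter, Finset.mem_product, Finset.mem_univ, and_true,
    and_iff_right_iff_imp, Finset.mem_Icc, Pi.le_def]
  intro h
  have h_abs := supDist_le_iff.1 (h e.1 (Sym2.mem_mk_left _ _))
  simp only [Pi.zero_apply, sub_zero] at h_abs
  exact ⟨fun i => by have := h_abs i; omega, fun i => by have := h_abs i; omega⟩

end Lattice

section ReflTransGen

open Relation

variable {α : Type*} {r s : α → α → Prop} {x y : α}

lemma exists_first_passage {ℓ : α → ℕ} (hℓ : ∀ a b, r a b → ℓ b ≤ ℓ a + 1) {m : ℕ}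
    (hxy : ReflTransGen r x y) (hx : ℓ x ≤ m) (hy : m ≤ ℓ y) :
    ∃ z, ℓ z = m ∧ ReflTransGen (fun a b => r a b ∧ ℓ a ≤ m ∧ ℓ b ≤ m) x z ∧
      ReflTransGen r z y := by
  induction hxy using ReflTransGen.head_induction_on with
  | refl => exact ⟨y, hx.antisymm hy, .refl, .refl⟩
  | head hab hby ih =>
    rename_i a b
    obtain ha | ha := hx.eq_or_lt
    · exact ⟨a, ha, .refl, .head hab hby⟩
    · have hb : ℓ b ≤ m := (hℓ a b hab).trans ha
      obtain ⟨z, hz, hbz, hzy⟩ := ih hb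
      exact ⟨z, hz, .head ⟨hab, hx, hb⟩ hbz, hzy⟩

lemma reflTransGen_iff_of_agree (h : ∀ a, ReflTransGen r x a → ∀ b, r a b ↔ s a b) :
    ReflTransGen r x y ↔ ReflTransGen s x y := by
  constructor <;> intro hxy
  · induction hxy with
    | refl => exact .refl
    | tail hxa hab ih => exact ih.tail ((h _ hxa _).1 hab)
  · induction hxy with
    | refl => exact .refl
    | tail _ hab ih => exact ih.tail ((h _ ih _).2 hab)

end ReflTransGen

section Connectivity

open Relation

variable {d : ℕ} {ω ω' : Config d}

/-- `x ↔ A`: there is a finite path of open edges joining `x` to some vertex of `A`. -/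
def ConnTo (ω : Config d) (x : Vertex d) (A : Set (Vertex d)) : Prop := ∃ y ∈ A, Conn ω x y

lemma openAdj_comm {u v : Vertex d} : openAdj ω u v ↔ openAdj ω v u := or_comm

lemma conn_comm {x y : Vertex d} : Conn ω x y ↔ Conn ω y x := by
  have swap_openAdj : Function.swap (openAdj ω) = openAdj ω :=
    funext₂ fun _ _ => propext openAdj_comm
  rw [Conn, ← reflTransGen_swap, swap_openAdj, Conn]

lemma openAdj.mono (h : ω ≤ ω') {u v : Vertex d} (huv : openAdj ω u v) : openAdj ω' u v := by
  rw [openAdj_iff_exists_edge] at huv ⊢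
  obtain ⟨e, h_open, h_ends⟩ := huv
  exact ⟨e, Bool.le_iff_imp.1 (h e) h_open, h_ends⟩

lemma Conn.mono (h : ω ≤ ω') {x y : Vertex d} (hxy : Conn ω x y) : Conn ω' x y :=
  ReflTransGen.mono (fun _ _ => openAdj.mono h) _ _ hxy

lemma ConnTo.mono (h : ω ≤ ω') {x : Vertex d} {A : Set (Vertex d)} :
    ConnTo ω x A → ConnTo ω' x A :=
  fun ⟨y, hy, hxy⟩ => ⟨y, hy, hxy.mono h⟩

lemma Conn.exists_mem_boxBdry {c x y : Vertex d} (hxy : Conn ω x y) {m : ℕ}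
    (hx : supDist x c ≤ m) (hy : m ≤ supDist y c) :
    ∃ z ∈ boxBdry c m, Conn ω x z ∧ Conn ω z y := by
  obtain ⟨z, hz, hxz, hzy⟩ := exists_first_passage (fun _ _ h => h.supDist_le_succ c) hxy hx hy
  exact ⟨z, hz, ReflTransGen.mono (fun _ _ h => h.1) _ _ hxz, hzy⟩

lemma Conn.connTo_boxBdry {x y : Vertex d} (hxy : Conn ω x y) {m : ℕ} (hm : m ≤ supDist y x) :
    ConnTo ω x (boxBdry x m) := by
  obtain ⟨z, hz, hxz, -⟩ := hxy.exists_mem_boxBdry ((supDist_self x).trans_le m.zero_le) hm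
  exact ⟨z, hz, hxz⟩

lemma ConnTo.boxBdry_of_le {x : Vertex d} {m n : ℕ} (hmn : m ≤ n) :
    ConnTo ω x (boxBdry x n) → ConnTo ω x (boxBdry x m) :=
  fun ⟨_, hy, hxy⟩ => hxy.connTo_boxBdry (hmn.trans_eq hy.symm)

lemma connTo_boxBdry_iff_exists_conn {x : Vertex d} {k n : ℕ} (hk : k ≤ n) :
    ConnTo ω x (boxBdry x n) ↔
      ∃ z ∈ boxBdry x k, Conn ω z x ∧ ConnTo ω z (boxBdry x n) := by
  constructor
  · rintro ⟨y, hy, hxy⟩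
    obtain ⟨z, hz, hxz, hzy⟩ := hxy.exists_mem_boxBdry ((supDist_self x).trans_le k.zero_le)
      (hk.trans_eq hy.symm)
    exact ⟨z, hz, conn_comm.1 hxz, y, hy, hzy⟩
  · rintro ⟨z, -, hzx, y, hy, hzy⟩
    exact ⟨y, hy, (conn_comm.1 hzx).trans hzy⟩

/-- By the reverse triangle inequality, `∂Λ_k` is at distance at least `|k - ‖x‖|` from `x`. -/
lemma ConnTo.boxBdry_dist {x c : Vertex d} {k : ℕ} :
    ConnTo ω x (boxBdry c k) → ConnTo ω x (boxBdry x (Nat.dist k (supDist x c))) := by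
  rintro ⟨y, hy, hxy⟩
  refine hxy.connTo_boxBdry ?_
  have := supDist_triangle y x c
  have := supDist_triangle x y c
  rw [supDist_comm x y] at this
  rw [mem_boxBdry] at hy
  simp only [Nat.dist]
  omega

/-- The translate of a configuration which moves the vertex `v` to the origin. -/
def translateConfig (v : Vertex d) (ω : Config d) : Config d := fun e => ω (e.1 + v, e.2)

lemma openAdj_translateConfig {v a b : Vertex d} :
    openAdj (translateConfig v ω) a b ↔ openAdj ω (a + v) (b + v) := by
  simp only [openAdj, translateConfig, add_right_comm _ v, (add_left_injective v).eq_iff]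

lemma conn_translateConfig {v a b : Vertex d} :
    Conn (translateConfig v ω) a b ↔ Conn ω (a + v) (b + v) := by
  constructor <;> intro h
  · exact ReflTransGen.lift (· + v) (fun _ _ => openAdj_translateConfig.1) _ _ h
  · have h_sub : Conn (translateConfig v ω) (a + v - v) (b + v - v) :=
      ReflTransGen.lift (· - v) (fun _ _ h => openAdj_translateConfig.2 (by simpa using h)) _ _ h
    simpa only [add_sub_cancel_right] using h_sub

lemma connTo_translateConfig {v : Vertex d} {m : ℕ} :
    ConnTo (translateConfig v ω) 0 (boxBdry 0 m) ↔ ConnTo ω v (boxBdry v m) := by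
  have add_mem_boxBdry (y : Vertex d) : y + v ∈ boxBdry v m ↔ y ∈ boxBdry 0 m := by
    rw [mem_boxBdry, mem_boxBdry, ← supDist_add_right y 0 v, zero_add]
  rw [ConnTo, ConnTo, (Equiv.addRight v).surjective.exists (p := fun y => y ∈ boxBdry v m ∧ _)]
  simp only [conn_translateConfig, Equiv.coe_addRight, add_mem_boxBdry, zero_add]

end Connectivity

section Measure

open Function

lemma IsBernoulliFamily.measureReal_comp_mem {d : ℕ} {P : ℝ → Measure (Config d)}
    (hP : IsBernoulliFamily P) {p : ℝ} (hp : p ∈ Set.Icc (0 : ℝ) 1) {E : Type*} [Fintype E]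
    [DecidableEq E] {φ : E → Edge d} (hφ : Injective φ) (A : Set (E → Bool)) :
    (P p).real {ω | ω ∘ φ ∈ A} = expect (fun _ => p) (A.indicator 1) := by
  have := hP.1 p
  have measurable_comp : Measurable fun ω : Config d => ω ∘ φ := by
    unfold comp
    fun_prop
  have cylinder_eq (σ : E → Bool) : (fun ω : Config d => ω ∘ φ) ⁻¹' {σ} =
      {ω | ∀ e ∈ Finset.univ.image φ, ω e = extend φ σ ⊥ e} := by
    ext ω
    simp [funext_iff, hφ.extend_apply]
  have cylinder_prob (σ : E → Bool) :
      ((P p).map fun ω => ω ∘ φ).real {σ} = weight (fun _ => p) σ := by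
    rw [map_measureReal_apply measurable_comp (measurableSet_singleton σ), cylinder_eq,
      measureReal_def, hP.2 p hp, Finset.prod_image hφ.injOn, ENNReal.toReal_prod]
    refine Finset.prod_congr rfl fun e _ => ?_
    rw [hφ.extend_apply]
    exact ENNReal.toReal_ofReal (bitWeight_nonneg hp (σ e))
  have : IsProbabilityMeasure ((P p).map fun ω => ω ∘ φ) :=
    Measure.isProbabilityMeasure_map measurable_comp.aemeasurable
  calc (P p).real {ω | ω ∘ φ ∈ A} = ((P p).map fun ω => ω ∘ φ).real A :=
      (map_measureReal_apply measurable_comp A.toFinite.measurableSet).symm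
    _ = ∫ σ, A.indicator 1 σ ∂(P p).map fun ω => ω ∘ φ :=
      (integral_indicator_one A.toFinite.measurableSet).symm
    _ = expect (fun _ => p) (A.indicator 1) := by
      simp only [integral_fintype Integrable.of_finite, cylinder_prob, expect_apply, smul_eq_mul]

end Measure

section BoxConfigurations

open Function Relation

variable {d : ℕ}

/-- The configuration which agrees with `σ` on `S` and in which all other edges are closed. -/
noncomputable def extendClosed {S : Finset (Edge d)} (σ : S → Bool) : Config d :=
  extend Subtype.val σ ⊥

lemma extendClosed_coe {S : Finset (Edge d)} (σ : S → Bool) (e : S) : extendClosed σ e = σ e :=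
  Subtype.val_injective.extend_apply σ ⊥ e

lemma extendClosed_eq_true_iff {S : Finset (Edge d)} {σ : S → Bool} {e : Edge d} :
    extendClosed σ e = true ↔ ∃ he : e ∈ S, σ ⟨e, he⟩ = true := by
  by_cases he : e ∈ S
  · simp [he, ← extendClosed_coe σ ⟨e, he⟩]
  · have not_exists : ¬∃ x : S, x.1 = e := by simpa using he
    rw [extendClosed, extend_apply' _ _ _ not_exists]
    simp [he]

lemma extendClosed_mono {S : Finset (Edge d)} :
    Monotone (extendClosed : (S → Bool) → Config d) := fun σ τ hστ e =>
  Bool.le_iff_imp.2 fun he => by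
    obtain ⟨h_mem, h_open⟩ := extendClosed_eq_true_iff.1 he
    exact extendClosed_eq_true_iff.2 ⟨h_mem, Bool.le_iff_imp.1 (hστ _) h_open⟩

lemma extendClosed_restrict_le (S : Finset (Edge d)) (ω : Config d) :
    extendClosed (ω ∘ ((↑) : S → Edge d)) ≤ ω := fun _ =>
  Bool.le_iff_imp.2 fun he => (extendClosed_eq_true_iff.1 he).2

lemma connTo_boxBdry_extendClosed_iff {ω : Config d} {n : ℕ} :
    ConnTo (extendClosed (ω ∘ ((↑) : boxEdges d n → Edge d))) 0 (boxBdry 0 n) ↔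
      ConnTo ω 0 (boxBdry 0 n) := by
  refine ⟨ConnTo.mono (extendClosed_restrict_le _ ω), ?_⟩
  rintro ⟨y, hy, h_conn⟩
  obtain ⟨z, hz, h_inside, -⟩ := exists_first_passage (ℓ := (supDist · 0))
    (fun _ _ h => h.supDist_le_succ 0) h_conn ((supDist_self 0).trans_le n.zero_le) hy.ge
  refine ⟨z, hz, ReflTransGen.mono (fun a b ⟨hab, ha, hb⟩ => ?_) _ _ h_inside⟩
  obtain ⟨e, h_open, h_ends⟩ := openAdj_iff_exists_edge.1 hab
  refine openAdj_iff_exists_edge.2 ⟨e, ?_, h_ends⟩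
  exact extendClosed_eq_true_iff.2 ⟨mem_boxEdges.2 (by simp [h_ends, ha, hb]), h_open⟩

/-- The event `0 ↔ ∂Λ_n`, in terms of the edges of `Λ_n`. -/
def boxArm (d n : ℕ) : Set (boxEdges d n → Bool) :=
  {σ | ConnTo (extendClosed σ) 0 (boxBdry 0 n)}

lemma monotone_indicator_boxArm (n : ℕ) :
    Monotone ((boxArm d n).indicator (1 : (boxEdges d n → Bool) → ℝ)) :=
  monotone_indicator_one_of_isUpperSet fun _ _ hστ => ConnTo.mono (extendClosed_mono hστ)

/-- The edges revealed by exploring the clusters of `∂Λ_k` inside `Λ_n`. -/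
def explored (n k : ℕ) (σ : boxEdges d n → Bool) : Set (boxEdges d n) :=
  {e | ∃ v ∈ endpoints e.1, ConnTo (extendClosed σ) v (boxBdry 0 k)}

lemma monotone_explored (n k : ℕ) : Monotone (explored (d := d) n k) :=
  fun _ _ hστ _ ⟨v, hv, h_conn⟩ => ⟨v, hv, h_conn.mono (extendClosed_mono hστ)⟩

lemma conn_extendClosed_iff_of_eqOn_explored {n k : ℕ} {σ τ : boxEdges d n → Bool}
    (h : Set.EqOn σ τ (explored n k σ)) {z y : Vertex d} (hz : z ∈ boxBdry 0 k) :
    Conn (extendClosed σ) z y ↔ Conn (extendClosed τ) z y := by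
  refine reflTransGen_iff_of_agree fun a hza b => ?_
  simp only [openAdj_iff_exists_edge, extendClosed_eq_true_iff]
  refine exists_congr fun e => and_congr_left fun h_ends => exists_congr fun he => ?_
  rw [h (x := ⟨e, he⟩) ⟨a, by simp [h_ends], z, hz, conn_comm.1 hza⟩]

/-- A path from `0` to `∂Λ_n` visits `∂Λ_k`, so it lies in a cluster explored from `∂Λ_k`. -/
lemma isMonotoneCertificate_explored {n k : ℕ} (hk : k ≤ n) :
    IsMonotoneCertificate (explored (d := d) n k) ((boxArm d n).indicator 1) where
  monotone := monotone_explored n k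
  eq_of_eqOn {σ τ} h := by
    have mem_boxArm_iff : σ ∈ boxArm d n ↔ τ ∈ boxArm d n := by
      simp only [boxArm, Set.mem_ofPred_eq, connTo_boxBdry_iff_exists_conn hk]
      refine exists_congr fun z => and_congr_right fun hz => ?_
      simp only [ConnTo, conn_extendClosed_iff_of_eqOn_explored h hz]
    classical simp only [Set.indicator_apply, mem_boxArm_iff, Pi.one_apply]

end BoxConfigurations

section Theta

variable {d : ℕ} {P : ℝ → Measure (Config d)} {p : ℝ}

lemma IsBernoulliFamily.measureReal_connTo_boxBdry (hP : IsBernoulliFamily P)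
    (hp : p ∈ Set.Icc (0 : ℝ) 1) (v : Vertex d) (n : ℕ) :
    (P p).real {ω | ConnTo ω v (boxBdry v n)} = expect (fun _ => p) ((boxArm d n).indicator 1) := by
  let φ : boxEdges d n → Edge d := fun e => (e.1.1 + v, e.1.2)
  have φ_injective : Function.Injective φ := fun e e' h => by
    obtain ⟨h_vertex, h_dir⟩ := Prod.ext_iff.1 h
    exact Subtype.ext (Prod.ext (add_left_injective v h_vertex) h_dir)
  rw [← hP.measureReal_comp_mem hp φ_injective]
  congr 1
  ext ω
  exact connTo_translateConfig.symm.trans connTo_boxBdry_extendClosed_iff.symm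

lemma theta_eq_expect (hd : 0 < d) (hP : IsBernoulliFamily P) (hp : p ∈ Set.Icc (0 : ℝ) 1)
    (n : ℕ) : theta P n p = expect (fun _ => p) ((boxArm d n).indicator 1) := by
  rw [theta, bdry_eq_boxBdry_zero hd]
  exact hP.measureReal_connTo_boxBdry hp 0 n

lemma theta_eq_measureReal (hd : 0 < d) (hP : IsBernoulliFamily P) (hp : p ∈ Set.Icc (0 : ℝ) 1)
    (n : ℕ) (v : Vertex d) : theta P n p = (P p).real {ω | ConnTo ω v (boxBdry v n)} := by
  rw [theta_eq_expect hd hP hp, hP.measureReal_connTo_boxBdry hp]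

lemma theta_nonneg (P : ℝ → Measure (Config d)) (n : ℕ) (p : ℝ) : 0 ≤ theta P n p :=
  ENNReal.toReal_nonneg

lemma theta_zero (hd : 0 < d) (hP : IsBernoulliFamily P) : theta P 0 p = 1 := by
  have := hP.1 p
  have event_eq : {ω : Config d | ∃ y ∈ bdry d 0, Conn ω 0 y} = Set.univ := by
    rw [bdry_eq_boxBdry_zero hd]
    exact Set.eq_univ_of_forall fun ω => ⟨0, supDist_self 0, .refl⟩
  rw [theta, event_eq, measure_univ, ENNReal.toReal_one]

lemma theta_antitone (hd : 0 < d) (hP : IsBernoulliFamily P) : Antitone fun n => theta P n p := by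
  have := hP.1 p
  intro m n hmn
  simp only [theta, bdry_eq_boxBdry_zero hd]
  exact measureReal_mono fun _ => ConnTo.boxBdry_of_le hmn

lemma sum_theta_pos (hd : 0 < d) (hP : IsBernoulliFamily P) {n : ℕ} (hn : 1 ≤ n) :
    0 < ∑ k ∈ Finset.range n, theta P k p :=
  Finset.sum_pos' (fun k _ => theta_nonneg P k p)
    ⟨0, Finset.mem_range.2 hn, (theta_zero hd hP).symm ▸ one_pos⟩

lemma bot_notMem_boxArm {n : ℕ} (hn : n ≠ 0) : ⊥ ∉ boxArm d n := by
  rintro ⟨y, hy, h_conn⟩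
  obtain rfl | ⟨z, hz, -⟩ := Relation.ReflTransGen.cases_head h_conn
  · exact hn (hy.symm.trans (supDist_self 0))
  · obtain ⟨e, h_open, -⟩ := openAdj_iff_exists_edge.1 hz
    obtain ⟨_, h_false⟩ := extendClosed_eq_true_iff.1 h_open
    exact Bool.false_ne_true h_false

/-- Closing all the edges of `Λ_1` disconnects `0` from `∂Λ_1`, hence from `∂Λ_n`. -/
lemma theta_le_one_sub_pow (hd : 0 < d) (hP : IsBernoulliFamily P) (hp : p ∈ Set.Icc (0 : ℝ) 1)
    {n : ℕ} (hn : 1 ≤ n) : theta P n p ≤ 1 - (1 - p) ^ (boxEdges d 1).card := by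
  have weight_bot : weight (fun _ : boxEdges d 1 => p) ⊥ = (1 - p) ^ (boxEdges d 1).card := by
    simp [weight, bitWeight]
  calc theta P n p ≤ theta P 1 p := theta_antitone hd hP hn
    _ = expect (fun _ => p) ((boxArm d 1).indicator 1) := theta_eq_expect hd hP hp 1
    _ ≤ 1 - weight (fun _ => p) ⊥ := expect_le_one_sub_weight (fun _ => hp)
      (fun σ => (indicator_one_mem_Icc _ σ).2)
      (Set.indicator_of_notMem (bot_notMem_boxArm one_ne_zero) _)
    _ = 1 - (1 - p) ^ (boxEdges d 1).card := by rw [weight_bot]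

lemma derivWithin_theta (hd : 0 < d) (hP : IsBernoulliFamily P) (hp : p ∈ Set.Icc (0 : ℝ) 1)
    (n : ℕ) : derivWithin (theta P n) (Set.Icc 0 1) p =
      ∑ e, influence (fun _ => p) ((boxArm d n).indicator 1) e := by
  have hasDerivAt_expect_boxArm := hasDerivAt_expect (p := fun s (_ : boxEdges d n) => s)
    (fun _ => hasDerivAt_id' p) ((boxArm d n).indicator 1)
  simp only [one_mul] at hasDerivAt_expect_boxArm
  exact (hasDerivAt_expect_boxArm.hasDerivWithinAt.congr_of_mem
    (fun s hs => theta_eq_expect hd hP hs n) hp).derivWithin (uniqueDiffOn_Icc_zero_one p hp)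

lemma revealment_explored_le (hd : 0 < d) (hP : IsBernoulliFamily P) (hp : p ∈ Set.Icc (0 : ℝ) 1)
    {n k : ℕ} {e : boxEdges d n} {v w : Vertex d} (h_ends : endpoints e.1 = s(v, w)) :
    revealment (fun _ => p) (explored n k) e ≤
      theta P (Nat.dist k (supDist v 0)) p + theta P (Nat.dist k (supDist w 0)) p := by
  have := hP.1 p
  let arm (u : Vertex d) : Set (Config d) :=
    {ω | ConnTo ω u (boxBdry u (Nat.dist k (supDist u 0)))}
  have subset_arm_union :
      {ω : Config d | ω ∘ ((↑) : boxEdges d n → Edge d) ∈ {σ | e ∈ explored n k σ}} ⊆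
        arm v ∪ arm w := by
    rintro ω ⟨u, hu, h_conn⟩
    have mem_arm : ω ∈ arm u := (h_conn.mono (extendClosed_restrict_le _ ω)).boxBdry_dist
    rw [h_ends, Sym2.mem_iff] at hu
    obtain rfl | rfl := hu
    · exact Or.inl mem_arm
    · exact Or.inr mem_arm
  calc revealment (fun _ => p) (explored n k) e
      = (P p).real {ω | ω ∘ ((↑) : boxEdges d n → Edge d) ∈ {σ | e ∈ explored n k σ}} :=
        (hP.measureReal_comp_mem hp Subtype.val_injective _).symm
    _ ≤ (P p).real (arm v ∪ arm w) := measureReal_mono subset_arm_union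
    _ ≤ (P p).real (arm v) + (P p).real (arm w) := measureReal_union_le _ _
    _ = _ := by rw [theta_eq_measureReal hd hP hp _ v, theta_eq_measureReal hd hP hp _ w]

lemma sum_revealment_explored_le (hd : 0 < d) (hP : IsBernoulliFamily P)
    (hp : p ∈ Set.Icc (0 : ℝ) 1) {n : ℕ} (e : boxEdges d n) :
    ∑ k ∈ Finset.range n, revealment (fun _ => p) (explored n (k + 1)) e ≤
      4 * ∑ k ∈ Finset.range n, theta P k p := by
  obtain ⟨v, w, h_ends⟩ : ∃ v w, endpoints e.1 = s(v, w) := ⟨_, _, rfl⟩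
  have sum_theta_dist_le {u : Vertex d} (hu : u ∈ endpoints e.1) :
      ∑ k ∈ Finset.range n, theta P (Nat.dist (k + 1) (supDist u 0)) p ≤
        2 * ∑ k ∈ Finset.range n, theta P k p :=
    sum_range_dist_le (theta_antitone hd hP) (fun k => theta_nonneg P k p)
      (mem_boxEdges.1 e.2 u hu)
  calc ∑ k ∈ Finset.range n, revealment (fun _ => p) (explored n (k + 1)) e
      ≤ ∑ k ∈ Finset.range n, (theta P (Nat.dist (k + 1) (supDist v 0)) p +
          theta P (Nat.dist (k + 1) (supDist w 0)) p) :=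
        Finset.sum_le_sum fun k _ => revealment_explored_le hd hP hp h_ends
    _ ≤ 2 * ∑ k ∈ Finset.range n, theta P k p + 2 * ∑ k ∈ Finset.range n, theta P k p := by
      rw [Finset.sum_add_distrib]
      gcongr
      · exact sum_theta_dist_le (by simp [h_ends])
      · exact sum_theta_dist_le (by simp [h_ends])
    _ = 4 * ∑ k ∈ Finset.range n, theta P k p := by ring

lemma mul_theta_mul_one_sub_theta_le (hd : 0 < d) (hP : IsBernoulliFamily P)
    (hp : p ∈ Set.Icc (0 : ℝ) 1) (n : ℕ) :
    n * (theta P n p * (1 - theta P n p)) ≤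
      (∑ k ∈ Finset.range n, theta P k p) * derivWithin (theta P n) (Set.Icc 0 1) p := by
  have osss := card_mul_covariance_le (s := Finset.range n) (fun _ : boxEdges d n => hp)
    (monotone_indicator_boxArm n) (indicator_one_mem_Icc (boxArm d n))
    (fun k hk => isMonotoneCertificate_explored (Finset.mem_range.1 hk))
    (sum_revealment_explored_le hd hP hp)
  rw [covariance_indicator_self, ← theta_eq_expect hd hP hp, Finset.card_range, ← Finset.mul_sum,
    ← derivWithin_theta hd hP hp] at osss
  have derivWithin_nonneg : 0 ≤ derivWithin (theta P n) (Set.Icc 0 1) p := by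
    rw [derivWithin_theta hd hP hp]
    exact Finset.sum_nonneg fun e _ =>
      influence_nonneg (fun _ => hp) (monotone_indicator_boxArm n) e
  have sum_nonneg : 0 ≤ ∑ k ∈ Finset.range n, theta P k p :=
    Finset.sum_nonneg fun k _ => theta_nonneg P k p
  have four_mul_le : 4 * (p * (1 - p)) ≤ 1 := by linarith [sq_nonneg (1 - 2 * p)]
  calc n * (theta P n p * (1 - theta P n p))
      ≤ 4 * (∑ k ∈ Finset.range n, theta P k p) *
          (p * (1 - p) * derivWithin (theta P n) (Set.Icc 0 1) p) := osss
    _ = 4 * (p * (1 - p)) *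
          ((∑ k ∈ Finset.range n, theta P k p) * derivWithin (theta P n) (Set.Icc 0 1) p) := by ring
    _ ≤ _ := mul_le_of_le_one_left (mul_nonneg sum_nonneg derivWithin_nonneg) four_mul_le

end Theta

/-- Differential inequality for Bernoulli percolation obtained by the OSSS
method: for every `ε > 0` there is `c > 0` such that for all `p ∈ [0, 1-ε]` and
`n ≥ 1`, `θ_n'(p) ≥ (c/2) (n / Σ_n(p)) θ_n(p)` with `Σ_n(p) = Σ_{k<n} θ_k(p)`. -/
theorem osss_differential_inequality {d : ℕ} (hd : 0 < d)
    (P : ℝ → Measure (Config d)) (hP : IsBernoulliFamily P) :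
    ∀ ε > (0 : ℝ), ∃ c > (0 : ℝ), ∀ p ∈ Set.Icc (0 : ℝ) (1 - ε), ∀ n : ℕ, 1 ≤ n →
      (c / 2) * ((n : ℝ) / ∑ k ∈ Finset.range n, theta P k p) * theta P n p ≤
        derivWithin (theta P n) (Set.Icc 0 1) p := by
  intro ε hε
  refine ⟨2 * ε ^ (boxEdges d 1).card, by positivity, fun p hp n hn => ?_⟩
  have hp_unit : p ∈ Set.Icc (0 : ℝ) 1 := ⟨hp.1, hp.2.trans (by linarith)⟩
  have theta_n_nonneg := theta_nonneg P n p
  have sum_pos : 0 < ∑ k ∈ Finset.range n, theta P k p := sum_theta_pos hd hP hn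
  have one_sub_theta_ge : ε ^ (boxEdges d 1).card ≤ 1 - theta P n p :=
    calc ε ^ (boxEdges d 1).card ≤ (1 - p) ^ (boxEdges d 1).card :=
          pow_le_pow_left₀ hε.le (by linarith [hp.2]) _
      _ ≤ 1 - theta P n p := by linarith [theta_le_one_sub_pow hd hP hp_unit hn]
  calc 2 * ε ^ (boxEdges d 1).card / 2 * (n / ∑ k ∈ Finset.range n, theta P k p) * theta P n p
      = n * (theta P n p * ε ^ (boxEdges d 1).card) / ∑ k ∈ Finset.range n, theta P k p := by ring
    _ ≤ n * (theta P n p * (1 - theta P n p)) / ∑ k ∈ Finset.range n, theta P k p := by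
      gcongr
    _ ≤ derivWithin (theta P n) (Set.Icc 0 1) p :=
      (div_le_iff₀' sum_pos).2 (mul_theta_mul_one_sub_theta_le hd hP hp_unit n)
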